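/- add(N) equals the least cardinality of a family F ⊆ ω^ω such that there is no single slalom φ with f(n) ∈ φ(n) for all but finitely many n for every f ∈ F. Here add(N) is the least cardinality of a family of null subsets of 2^ω whose union is not null. (In the paper's notation: b_{⊆*} = add(N).) -/

import Mathlib

open Filter Set MeasureTheory Cardinal

/-- A slalom: φ : ℕ → Finset ℕ with |φ(n)| ≤ (n+1)^k for all n, for some fixed k. -/
def IsSlalom (φ : ℕ → Finset ℕ) : Prop := ∃ k : ℕ, ∀ n : ℕ, (φ n).card ≤ (n + 1) ^ k

/-- A measure on Cantor space is the fair-coin product measure iff it is a probability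
measure giving each cylinder determined by finitely many coordinates its fair value. -/
def IsFairCoin (μ : Measure (ℕ → Bool)) : Prop :=
  IsProbabilityMeasure μ ∧
  ∀ (s : Finset ℕ) (σ : ℕ → Bool),
    μ {f : ℕ → Bool | ∀ i ∈ s, f i = σ i} = (1 / 2 : ENNReal) ^ s.card

/-!
The two directions are Tukey maps between (null sets, ⊆) and (ω^ω, slaloms, ⊆*).

* A null set lies in the limsup of a sequence of sets taken from one fixed countable algebra, the
  `n`-th having measure at most `2⁻ⁿ`; it is coded by the sequence of their indices. The sets of
  measure at most `2⁻ⁿ` named by `φ n`, for a slalom `φ`, have a union of measure at most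
  `(n + 1) ^ k * 2⁻ⁿ`, so by Borel–Cantelli a single null set contains every null set whose code is
  captured by `φ`.
* In the other direction, a function `f` is sent to the limsup of `G n (f n)`, where for each `n`
  the events `G n i` are independent of measure about `(n + 1)⁻²`. If a null set `N` contains many
  of these limsups, take a closed set `K` disjoint from `N` all of whose nonempty relatively open
  subsets have positive measure. By the Baire category theorem some nonempty `K ∩ u`, with `u` in a
  countable basis, misses `G n (f n)` for all large `n`; by independence a set of positive measure
  misses only `O((n + 1) ^ 2)` of the `G n i`, and diagonalizing over the basis yields the slalom.
-/

open TopologicalSpace ProbabilityTheory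

/-- `F` is localized when a single slalom captures all its members, that is, when `F` is bounded
with respect to `⊆*`. -/
def IsLocalized (F : Set (ℕ → ℕ)) : Prop :=
  ∃ φ : ℕ → Finset ℕ, IsSlalom φ ∧ ∀ f ∈ F, ∀ᶠ n in atTop, f n ∈ φ n

theorem not_isLocalized_univ : ¬ IsLocalized univ := by
  rintro ⟨φ, -, hφ⟩
  choose f hf using fun n => Infinite.exists_notMem_finset (φ n)
  obtain ⟨n, hn⟩ := (hφ f (mem_univ f)).exists
  exact hf n hn

theorem IsSlalom.mono {φ ψ : ℕ → Finset ℕ} (hφ : IsSlalom φ) (h : ∀ n, ψ n ⊆ φ n) :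
    IsSlalom ψ := by
  obtain ⟨k, hk⟩ := hφ
  exact ⟨k, fun n => (Finset.card_le_card (h n)).trans (hk n)⟩

theorem encard_le_of_forall_finset_card_le {α : Type*} {s : Set α} {c : ℕ}
    (h : ∀ P : Finset α, ↑P ⊆ s → P.card ≤ c) : s.encard ≤ c := by
  by_contra! hc
  obtain ⟨t, hts, ht⟩ := exists_subset_encard_eq (Order.add_one_le_of_lt hc)
  lift t to Finset α using finite_of_encard_eq_coe ht
  have hcard : t.card = c + 1 := by exact_mod_cast encard_coe_eq_coe_finsetCard t ▸ ht
  exact absurd (h t hts) (by omega)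

theorem exists_isSlalom_forall_eventually_subset {S : ℕ → ℕ → Set ℕ} {L : ℕ → ℕ} {k : ℕ}
    (hS : ∀ j n, (S j n).encard ≤ (L j * (n + 1) ^ k : ℕ)) :
    ∃ φ : ℕ → Finset ℕ, IsSlalom φ ∧ ∀ j, ∀ᶠ n in atTop, S j n ⊆ φ n := by
  have hfinset : ∀ j n, ∃ T : Finset ℕ, ↑T = S j n ∧ T.card ≤ L j * (n + 1) ^ k := by
    intro j n
    obtain ⟨T, hT⟩ := (finite_of_encard_le_coe (hS j n)).exists_finset_coe
    refine ⟨T, hT, ?_⟩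
    have hle := hS j n
    rw [← hT, encard_coe_eq_coe_finsetCard] at hle
    exact_mod_cast hle
  choose T hTS hT using hfinset
  -- The condition `L j ≤ n + 1` delays `S j` until its constant is absorbed by one more power.
  refine ⟨fun n => {j ∈ Finset.range (n + 1) | L j ≤ n + 1}.biUnion (T · n),
    ⟨k + 2, fun n => ?_⟩, fun j => ?_⟩
  · calc _ ≤ (Finset.card {j ∈ Finset.range (n + 1) | L j ≤ n + 1}) * ((n + 1) * (n + 1) ^ k) := by
          refine Finset.card_biUnion_le_card_mul _ _ _ fun j hj => (hT j n).trans ?_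
          exact Nat.mul_le_mul_right _ (Finset.mem_filter.1 hj).2
      _ ≤ (n + 1) * ((n + 1) * (n + 1) ^ k) := by
          gcongr
          exact (Finset.card_filter_le _ _).trans (Finset.card_range _).le
      _ = (n + 1) ^ (k + 2) := by ring
  · filter_upwards [eventually_ge_atTop j, eventually_ge_atTop (L j)] with n hjn hLn
    rw [← hTS]
    exact_mod_cast Finset.subset_biUnion_of_mem (T · n)
      (Finset.mem_filter.2 ⟨Finset.mem_range.2 (by omega), by omega⟩)

theorem tsum_natCast_add_one_pow_mul_inv_two_pow_ne_top (k : ℕ) :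
    ∑' n : ℕ, ((n + 1 : ℕ) : ENNReal) ^ k * 2⁻¹ ^ n ≠ ⊤ := by
  have hgeom : Summable fun n : ℕ => (n : ℝ) ^ k * 2⁻¹ ^ n :=
    summable_pow_mul_geometric_of_norm_lt_one k (by norm_num)
  have hsummable : Summable fun n : ℕ => ((n + 1 : ℕ) : ℝ) ^ k * 2⁻¹ ^ n :=
    (((summable_nat_add_iff 1).2 hgeom).mul_left 2).congr fun n => by rw [pow_succ]; ring
  have hofReal : ∀ n : ℕ, ENNReal.ofReal (((n + 1 : ℕ) : ℝ) ^ k * 2⁻¹ ^ n) =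
      ((n + 1 : ℕ) : ENNReal) ^ k * 2⁻¹ ^ n := by
    intro n
    rw [ENNReal.ofReal_mul (by positivity), ENNReal.ofReal_pow (by positivity),
      ENNReal.ofReal_natCast, ENNReal.ofReal_pow (by positivity),
      ENNReal.ofReal_inv_of_pos two_pos, ENNReal.ofReal_ofNat]
  simpa only [hofReal] using hsummable.tsum_ofReal_ne_top

section NullSetsToFunctions

variable {X : Type*}

theorem limsup_subset_limsup_biUnion_Ico (E : ℕ → Set X) {m : ℕ → ℕ} (hm : StrictMono m) :
    limsup E atTop ⊆ limsup (fun n => ⋃ i ∈ Finset.Ico (m n) (m (n + 1)), E i) atTop := by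
  intro x hx
  rw [mem_limsup_iff_frequently_mem, frequently_atTop] at hx ⊢
  intro N
  obtain ⟨p, hp, hxp⟩ := hx (m N)
  have hunbdd : ¬ BddAbove (m '' Ici N) :=
    ((Ici_infinite N).image hm.injective.injOn).not_bddAbove
  have hcover : p ∈ ⋃ n ∈ Ici N, Ico (m n) (m (Order.succ n)) := by
    rwa [biUnion_Ici_Ico_map_succ (fun n hn => hm.monotone hn) hunbdd]
  simp only [mem_iUnion, mem_Ici, Order.succ_eq_add_one, exists_prop] at hcover
  obtain ⟨n, hNn, hpn⟩ := hcover
  exact ⟨n, hNn, mem_biUnion (Finset.mem_Ico.2 hpn) hxp⟩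

theorem exists_strictMono_measure_biUnion_Ico_le [MeasurableSpace X] {μ : Measure X}
    {E : ℕ → Set X} (hE : ∑' p, μ (E p) ≠ ⊤) {ε : ℕ → ENNReal} (hε : ∀ n, 0 < ε n) :
    ∃ m : ℕ → ℕ, StrictMono m ∧
      ∀ n, μ (⋃ i ∈ Finset.Ico (m n) (m (n + 1)), E i) ≤ ε n := by
  obtain ⟨m, hm, htail⟩ := extraction_forall_of_eventually
    (P := fun n k => ∑' i, μ (E (i + k)) < ε n)
    fun n => (ENNReal.tendsto_sum_nat_add _ hE).eventually_lt_const (hε n)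
  refine ⟨m, hm, fun n => ?_⟩
  calc μ (⋃ i ∈ Finset.Ico (m n) (m (n + 1)), E i)
      ≤ ∑ i ∈ Finset.Ico (m n) (m (n + 1)), μ (E i) := measure_biUnion_finset_le _ _
    _ = ∑ i ∈ Finset.range (m (n + 1) - m n), μ (E (i + m n)) := by
        simp only [Finset.sum_Ico_eq_sum_range, add_comm]
    _ ≤ ∑' i, μ (E (i + m n)) := ENNReal.sum_le_tsum _
    _ ≤ ε n := (htail n).le

theorem IsSlalom.measure_limsup_biUnion_eq_zero [MeasurableSpace X] {μ : Measure X}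
    {φ : ℕ → Finset ℕ} (hφ : IsSlalom φ) {e : ℕ → Set X}
    (he : ∀ n, ∀ i ∈ φ n, μ (e i) ≤ 2⁻¹ ^ n) :
    μ (limsup (fun n => ⋃ i ∈ φ n, e i) atTop) = 0 := by
  obtain ⟨k, hk⟩ := hφ
  have hbound : ∀ n, μ (⋃ i ∈ φ n, e i) ≤ ((n + 1 : ℕ) : ENNReal) ^ k * 2⁻¹ ^ n := by
    intro n
    calc μ (⋃ i ∈ φ n, e i) ≤ ∑ i ∈ φ n, μ (e i) := measure_biUnion_finset_le _ _
      _ ≤ (φ n).card • 2⁻¹ ^ n := Finset.sum_le_card_nsmul _ _ _ (he n)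
      _ ≤ ((n + 1 : ℕ) : ENNReal) ^ k * 2⁻¹ ^ n := by
        rw [nsmul_eq_mul]
        gcongr
        exact_mod_cast hk n
  exact measure_limsup_atTop_eq_zero <| ne_top_of_le_ne_top
    (tsum_natCast_add_one_pow_mul_inv_two_pow_ne_top k) (ENNReal.tsum_le_tsum hbound)

variable [TopologicalSpace X]

theorem exists_pairwise_disjoint_iUnion_eq_of_isOpen {B : Set (Set X)} (hB : IsTopologicalBasis B)
    (hBc : B.Countable) {U : Set X} (hU : IsOpen U) :
    ∃ s : ℕ → Set X, (∀ i, s i ∈ generateSetAlgebra B) ∧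
      Pairwise (Function.onFun Disjoint s) ∧ ⋃ i, s i = U := by
  have halg : IsSetAlgebra (generateSetAlgebra B) := isSetAlgebra_generateSetAlgebra
  obtain ⟨S, hSB, rfl⟩ := hB.open_eq_sUnion hU
  obtain ⟨s, hs⟩ := ((hBc.mono hSB).insert ∅).exists_eq_range (insert_nonempty ∅ S)
  have hmem : ∀ i, s i ∈ generateSetAlgebra B := by
    intro i
    rcases hs ▸ mem_range_self i with hi | hi
    · exact hi ▸ halg.empty_mem
    · exact self_subset_generateSetAlgebra (hSB hi)
  refine ⟨disjointed s, fun i => halg.isSetRing.disjointed_mem hmem i, disjoint_disjointed s, ?_⟩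
  rw [iUnion_disjointed, ← sUnion_range, ← hs, sUnion_insert, empty_union]

variable [MeasurableSpace X] [OpensMeasurableSpace X] (μ : Measure X) [μ.OuterRegular]

theorem exists_seq_generateSetAlgebra_subset_limsup {B : Set (Set X)} (hB : IsTopologicalBasis B)
    (hBc : B.Countable) {A : Set X} (hA : μ A = 0) :
    ∃ E : ℕ → Set X, (∀ p, E p ∈ generateSetAlgebra B) ∧ ∑' p, μ (E p) ≠ ⊤ ∧
      A ⊆ limsup E atTop := by
  have hmeas : ∀ s ∈ generateSetAlgebra B, MeasurableSet s := by
    intro s hs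
    have hgen := MeasurableSpace.measurableSet_generateFrom hs
    rw [generateFrom_generateSetAlgebra_eq] at hgen
    exact MeasurableSpace.generateFrom_le (fun t ht => (hB.isOpen ht).measurableSet) s hgen
  have hcover : ∀ j : ℕ, ∃ U ⊇ A, IsOpen U ∧ μ U < 2⁻¹ ^ j := fun j =>
    A.exists_isOpen_lt_of_lt _ (hA ▸ ENNReal.pow_pos (by simp) j)
  choose U hAU hUo hU using hcover
  choose s hs hdisj hsU using fun j =>
    exists_pairwise_disjoint_iUnion_eq_of_isOpen hB hBc (hUo j)
  refine ⟨fun p => s p.unpair.1 p.unpair.2, fun p => hs _ _, ?_, fun x hx => ?_⟩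
  · have hsum : ∑' p : ℕ, μ (s p.unpair.1 p.unpair.2) = ∑' j, μ (U j) := by
      rw [← Nat.pairEquiv.tsum_eq, ENNReal.tsum_prod']
      refine tsum_congr fun j => ?_
      simp only [Nat.pairEquiv_apply, Function.uncurry_apply_pair, Nat.unpair_pair]
      rw [← hsU, measure_iUnion (hdisj j) fun i => hmeas _ (hs j i)]
    rw [hsum]
    refine ne_top_of_le_ne_top ?_ (ENNReal.tsum_le_tsum fun j => (hU j).le)
    simp [ENNReal.tsum_geometric]
  · have hpiece : ∀ j, ∃ i, x ∈ s j i := fun j => mem_iUnion.1 (hsU j ▸ hAU j hx)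
    choose i hi using hpiece
    rw [mem_limsup_iff_frequently_mem, Nat.frequently_atTop_iff_infinite]
    refine infinite_of_injective_forall_mem (f := fun j => Nat.pair j (i j)) ?_ ?_
    · exact fun a b hab => (Nat.pair_eq_pair.1 hab).1
    · exact fun j => by simpa using hi j

theorem exists_seq_forall_null_subset_limsup [SecondCountableTopology X]
    {ε : ℕ → ENNReal} (hε : ∀ n, 0 < ε n) :
    ∃ e : ℕ → Set X, ∀ A, μ A = 0 → ∃ f : ℕ → ℕ,
      (∀ n, μ (e (f n)) ≤ ε n) ∧ A ⊆ limsup (fun n => e (f n)) atTop := by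
  obtain ⟨B, hBc, -, hB⟩ := exists_countable_basis X
  have halg : IsSetAlgebra (generateSetAlgebra B) := isSetAlgebra_generateSetAlgebra
  obtain ⟨e, he⟩ := (countable_generateSetAlgebra hBc).exists_eq_range ⟨∅, halg.empty_mem⟩
  refine ⟨e, fun A hA => ?_⟩
  obtain ⟨E, hE, hsum, hAE⟩ := exists_seq_generateSetAlgebra_subset_limsup μ hB hBc hA
  obtain ⟨m, hm, hle⟩ := exists_strictMono_measure_biUnion_Ico_le hsum hε
  have hcode : ∀ n, ∃ k, e k = ⋃ i ∈ Finset.Ico (m n) (m (n + 1)), E i := fun n =>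
    mem_range.1 (he ▸ halg.biUnion_mem _ fun i _ => hE i)
  choose f hf using hcode
  simp only [← hf] at hle
  refine ⟨f, hle, hAE.trans ?_⟩
  simpa only [hf] using limsup_subset_limsup_biUnion_Ico E hm

theorem exists_tukeyMap_null_slalom [SecondCountableTopology X] :
    ∃ Φ : Set X → ℕ → ℕ, ∀ φ, IsSlalom φ → ∃ N, μ N = 0 ∧
      ∀ A, μ A = 0 → (∀ᶠ n in atTop, Φ A n ∈ φ n) → A ⊆ N := by
  classical
  obtain ⟨e, he⟩ := exists_seq_forall_null_subset_limsup μ (ε := fun n => 2⁻¹ ^ n)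
    fun n => ENNReal.pow_pos (by simp) n
  choose! Φ hΦ hsub using he
  refine ⟨Φ, fun φ hφ => ?_⟩
  have hsmall : IsSlalom fun n => {i ∈ φ n | μ (e i) ≤ 2⁻¹ ^ n} :=
    hφ.mono fun n => Finset.filter_subset _ _
  refine ⟨_, hsmall.measure_limsup_biUnion_eq_zero fun n i hi => (Finset.mem_filter.1 hi).2, ?_⟩
  intro A hA hcapt x hx
  have hfreq := mem_limsup_iff_frequently_mem.1 (hsub A hA hx)
  refine mem_limsup_iff_frequently_mem.2 ((hfreq.and_eventually hcapt).mono ?_)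
  rintro n ⟨hxn, hn⟩
  exact mem_biUnion (Finset.mem_filter.2 ⟨hn, hΦ A hA n⟩) hxn

end NullSetsToFunctions

section FunctionsToNullSets

variable {X : Type*}

theorem exists_mem_basis_eventually_disjoint [TopologicalSpace X]
    [IsCompletelyPseudoMetrizableSpace X] {B : Set (Set X)} (hB : IsTopologicalBasis B)
    {K : Set X} (hK : IsClosed K) (hne : K.Nonempty) {G : ℕ → Set X} (hG : ∀ n, IsOpen (G n))
    (hKG : Disjoint K (limsup G atTop)) :
    ∃ u ∈ B, (K ∩ u).Nonempty ∧ ∀ᶠ n in atTop, Disjoint (K ∩ u) (G n) := by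
  have := hK.isCompletelyPseudoMetrizableSpace
  have := hne.to_subtype
  let C : ℕ → Set K := fun m => ⋂ n ≥ m, (↑) ⁻¹' (G n)ᶜ
  have hC : ∀ m, IsClosed (C m) := fun m => isClosed_biInter fun n _ =>
    (hG n).isClosed_compl.preimage continuous_subtype_val
  have hcover : ⋃ m, C m = Set.univ := by
    refine eq_univ_of_forall fun x => ?_
    have hx : ∀ᶠ n in atTop, ↑x ∉ G n := by
      simpa [mem_limsup_iff_frequently_mem] using disjoint_left.1 hKG x.2
    simpa [C] using eventually_atTop.1 hx
  obtain ⟨m, x, hx⟩ := nonempty_interior_of_iUnion_of_closed hC hcover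
  obtain ⟨O, hO, hxO⟩ := mem_nhds_subtype _ _ _ |>.1 (mem_interior_iff_mem_nhds.1 hx)
  obtain ⟨u, hu, hxu, huO⟩ := hB.mem_nhds_iff.1 hO
  refine ⟨u, hu, ⟨x, x.2, hxu⟩, eventually_atTop.2 ⟨m, fun n hn => ?_⟩⟩
  rw [disjoint_left]
  rintro y ⟨hyK, hyu⟩
  exact mem_iInter₂.1 (hxO (show (⟨y, hyK⟩ : K) ∈ _ from huO hyu)) n hn

variable [MeasurableSpace X] {μ : Measure X}

theorem sum_measureReal_le_neg_log_of_disjoint {ι : Type*} {s : ι → Set X} (hs : iIndepSet s μ)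
    (hmeas : ∀ i, MeasurableSet (s i)) {W : Set X} (hW : μ W ≠ 0) {P : Finset ι}
    (hP : ∀ i ∈ P, Disjoint W (s i)) :
    ∑ i ∈ P, μ.real (s i) ≤ -Real.log (μ.real W) := by
  have := hs.isProbabilityMeasure
  have hindep : μ.real (⋂ i ∈ P, (s i)ᶜ) = ∏ i ∈ P, (1 - μ.real (s i)) := by
    have hcompl := (iIndepSet_iff s μ).1 hs P (f := fun i => (s i)ᶜ) fun i _ =>
      (MeasurableSpace.measurableSet_generateFrom (mem_singleton _)).compl
    rw [measureReal_def, hcompl, ENNReal.toReal_prod]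
    exact Finset.prod_congr rfl fun i _ => probReal_compl_eq_one_sub (hmeas i)
  have hexp : μ.real W ≤ Real.exp (-∑ i ∈ P, μ.real (s i)) :=
    calc μ.real W ≤ μ.real (⋂ i ∈ P, (s i)ᶜ) :=
          measureReal_mono (subset_iInter₂ fun i hi => (hP i hi).subset_compl_right)
      _ = ∏ i ∈ P, (1 - μ.real (s i)) := hindep
      _ ≤ ∏ i ∈ P, Real.exp (-μ.real (s i)) :=
          Finset.prod_le_prod (fun i _ => sub_nonneg.2 measureReal_le_one)
            fun i _ => Real.one_sub_le_exp_neg _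
      _ = Real.exp (-∑ i ∈ P, μ.real (s i)) := by
          rw [← Real.exp_sum, Finset.sum_neg_distrib]
  have hpos : 0 < μ.real W := ENNReal.toReal_pos hW (measure_ne_top μ W)
  linarith [(Real.log_le_iff_le_exp hpos).2 hexp]

theorem exists_forall_encard_disjoint_le {G : ℕ → ℕ → Set X} (hmeas : ∀ n i, MeasurableSet (G n i))
    (hindep : ∀ n, iIndepSet (G n) μ) {k : ℕ} (hG : ∀ n i, 1 ≤ μ.real (G n i) * (n + 1) ^ k)
    {W : Set X} (hW : μ W ≠ 0) :
    ∃ L : ℕ, ∀ n, {i | Disjoint W (G n i)}.encard ≤ (L * (n + 1) ^ k : ℕ) := by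
  obtain ⟨L, hL⟩ := exists_nat_ge (-Real.log (μ.real W))
  refine ⟨L, fun n => encard_le_of_forall_finset_card_le fun P hP => ?_⟩
  have hcard : (P.card : ℝ) ≤ L * (n + 1) ^ k :=
    calc (P.card : ℝ) = ∑ i ∈ P, 1 := by simp
      _ ≤ ∑ i ∈ P, μ.real (G n i) * (n + 1) ^ k := Finset.sum_le_sum fun i _ => hG n i
      _ = (∑ i ∈ P, μ.real (G n i)) * (n + 1) ^ k := (Finset.sum_mul ..).symm
      _ ≤ L * (n + 1) ^ k := by
          gcongr
          exact (sum_measureReal_le_neg_log_of_disjoint (hindep n) (hmeas n) hW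
            fun i hi => hP hi).trans hL
  exact_mod_cast hcard

variable [TopologicalSpace X]

theorem exists_isClosed_disjoint_forall_measure_inter_ne_zero [HereditarilyLindelofSpace X]
    [OpensMeasurableSpace X] [μ.OuterRegular] [NeZero μ] {N : Set X} (hN : μ N = 0) :
    ∃ K : Set X, IsClosed K ∧ K.Nonempty ∧ Disjoint K N ∧
      ∀ u, IsOpen u → (K ∩ u).Nonempty → μ (K ∩ u) ≠ 0 := by
  obtain ⟨V, hNV, hVo, hV⟩ := N.exists_isOpen_lt_of_lt (μ := μ) (μ Set.univ)
    (by rw [hN]; exact Measure.measure_univ_pos.2 (NeZero.ne μ))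
  set ν := μ.restrict Vᶜ
  have hνV : ν.support ⊆ Vᶜ := Measure.support_subset_of_isClosed hVo.isClosed_compl
    (ae_restrict_mem hVo.measurableSet.compl)
  refine ⟨ν.support, Measure.isClosed_support, ?_, ?_, ?_⟩
  · refine nonempty_iff_ne_empty.2 fun hempty => hV.not_ge ?_
    have hVc : μ Vᶜ = 0 := by
      simpa [ν, hempty] using Measure.measure_compl_support (μ := ν)
    exact (measure_univ_le_add_compl V).trans_eq (by rw [hVc, add_zero])
  · exact disjoint_left.2 fun x hxK hxN => hνV hxK (hNV hxN)
  · rintro u hu ⟨x, hxK, hxu⟩ hzero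
    have hpos : 0 < ν u := (Measure.mem_support_iff_forall x).1 hxK u (hu.mem_nhds hxu)
    have hle : ν u ≤ μ (ν.support ∩ u) := by
      rw [← measure_inter_conull Measure.measure_compl_support, inter_comm]
      exact Measure.restrict_apply_le _ _
    exact (hpos.trans_le hle).ne' hzero

variable [SecondCountableTopology X] [IsCompletelyPseudoMetrizableSpace X] [BorelSpace X]

theorem exists_seq_measure_ne_zero_forall_eventually_disjoint [μ.OuterRegular] [NeZero μ]
    {N : Set X} (hN : μ N = 0) :
    ∃ W : ℕ → Set X, (∀ j, μ (W j) ≠ 0) ∧ ∀ G : ℕ → Set X, (∀ n, IsOpen (G n)) →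
      limsup G atTop ⊆ N → ∃ j, ∀ᶠ n in atTop, Disjoint (W j) (G n) := by
  obtain ⟨K, hK, hne, hKN, hpos⟩ := exists_isClosed_disjoint_forall_measure_inter_ne_zero hN
  obtain ⟨B, hBc, -, hB⟩ := exists_countable_basis X
  let 𝒲 : Set (Set X) := (K ∩ ·) '' {u ∈ B | (K ∩ u).Nonempty}
  have hmem : ∀ G : ℕ → Set X, (∀ n, IsOpen (G n)) → limsup G atTop ⊆ N →
      ∃ w ∈ 𝒲, ∀ᶠ n in atTop, Disjoint w (G n) := by
    intro G hG hGN
    obtain ⟨u, hu, hKu, hdisj⟩ :=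
      exists_mem_basis_eventually_disjoint hB hK hne hG (hKN.mono_right hGN)
    exact ⟨K ∩ u, mem_image_of_mem _ ⟨hu, hKu⟩, hdisj⟩
  have h𝒲ne : 𝒲.Nonempty := by
    obtain ⟨w, hw, -⟩ := hmem (fun _ => ∅) (fun _ => isOpen_empty) (by simp)
    exact ⟨w, hw⟩
  obtain ⟨W, hW⟩ := ((hBc.mono (sep_subset _ _)).image _).exists_eq_range h𝒲ne
  refine ⟨W, fun j => ?_, fun G hG hGN => ?_⟩
  · obtain ⟨u, ⟨hu, hKu⟩, hWj⟩ : W j ∈ 𝒲 := hW.symm.subset (mem_range_self j)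
    exact hWj ▸ hpos u (hB.isOpen hu) hKu
  · obtain ⟨w, hw, hdisj⟩ := hmem G hG hGN
    obtain ⟨j, rfl⟩ := hW.subset hw
    exact ⟨j, hdisj⟩

theorem exists_isSlalom_forall_limsup_subset {G : ℕ → ℕ → Set X} (hopen : ∀ n i, IsOpen (G n i))
    (hindep : ∀ n, iIndepSet (G n) μ) {k : ℕ} (hG : ∀ n i, 1 ≤ μ.real (G n i) * (n + 1) ^ k)
    {N : Set X} (hN : μ N = 0) :
    ∃ φ, IsSlalom φ ∧ ∀ f : ℕ → ℕ, limsup (fun n => G n (f n)) atTop ⊆ N →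
      ∀ᶠ n in atTop, f n ∈ φ n := by
  have := (hindep 0).isProbabilityMeasure
  obtain ⟨W, hW, hdisj⟩ := exists_seq_measure_ne_zero_forall_eventually_disjoint hN
  choose L hL using fun j =>
    exists_forall_encard_disjoint_le (fun n i => (hopen n i).measurableSet) hindep hG (hW j)
  obtain ⟨φ, hφ, hsub⟩ := exists_isSlalom_forall_eventually_subset hL
  refine ⟨φ, hφ, fun f hf => ?_⟩
  obtain ⟨j, hj⟩ := hdisj _ (fun n => hopen n (f n)) hf
  filter_upwards [hj, hsub j] with n hn hsubn using hsubn hn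

end FunctionsToNullSets

section FairCoin

/-- The event that every coordinate in `s` comes up `true`. -/
def allTrue (s : Finset ℕ) : Set (ℕ → Bool) := {x | ∀ i ∈ s, x i = true}

theorem isOpen_allTrue (s : Finset ℕ) : IsOpen (allTrue s) := by
  have hinter : allTrue s = ⋂ i ∈ s, (fun x : ℕ → Bool => x i) ⁻¹' {true} := by
    ext x
    simp [allTrue]
  rw [hinter]
  exact isOpen_biInter_finset fun i _ => (isOpen_discrete _).preimage (continuous_apply i)

theorem biInter_allTrue {ι : Type*} (t : Finset ι) (b : ι → Finset ℕ) :
    ⋂ i ∈ t, allTrue (b i) = allTrue (t.biUnion b) := by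
  ext x
  simp only [allTrue, mem_iInter, mem_ofPred_eq, Finset.mem_biUnion]
  grind

variable {μ : Measure (ℕ → Bool)}

theorem IsFairCoin.measure_allTrue (hμ : IsFairCoin μ) (s : Finset ℕ) :
    μ (allTrue s) = (1 / 2) ^ s.card :=
  hμ.2 s fun _ => true

theorem IsFairCoin.iIndepSet_allTrue (hμ : IsFairCoin μ) {ι : Type*} {b : ι → Finset ℕ}
    (hb : Pairwise (Function.onFun Disjoint b)) : iIndepSet (fun i => allTrue (b i)) μ := by
  rw [iIndepSet_iff_meas_biInter fun i => (isOpen_allTrue (b i)).measurableSet]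
  intro t
  simp only [biInter_allTrue, hμ.measure_allTrue, Finset.prod_pow_eq_pow_sum,
    Finset.card_biUnion fun _ _ _ _ hij => hb hij]

/-- For fixed `n`, pairwise disjoint blocks of coordinates, whose length `2 * ⌊log₂ (n + 1)⌋` makes
the event that a block is all `true` have measure about `(n + 1)⁻²`. -/
def coinBlock (n i : ℕ) : Finset ℕ :=
  (Finset.range (2 * Nat.log 2 (n + 1))).image (Nat.pair i)

theorem card_coinBlock (n i : ℕ) : (coinBlock n i).card = 2 * Nat.log 2 (n + 1) := by
  rw [coinBlock, Finset.card_image_of_injective, Finset.card_range]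
  exact fun a b hab => (Nat.pair_eq_pair.1 hab).2

theorem pairwise_disjoint_coinBlock (n : ℕ) :
    Pairwise (Function.onFun Disjoint (coinBlock n)) := by
  intro i j hij
  simp only [Function.onFun, Finset.disjoint_left, coinBlock, Finset.mem_image]
  rintro _ ⟨t, -, rfl⟩ ⟨t', -, ht'⟩
  exact hij (Nat.pair_eq_pair.1 ht').1.symm

theorem IsFairCoin.measureReal_allTrue_coinBlock (hμ : IsFairCoin μ) (n i : ℕ) :
    μ.real (allTrue (coinBlock n i)) = ((2 ^ Nat.log 2 (n + 1) : ℝ) ^ 2)⁻¹ := by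
  rw [measureReal_def, hμ.measure_allTrue, card_coinBlock, ← pow_mul']
  simp

theorem IsFairCoin.one_le_measureReal_allTrue_coinBlock_mul (hμ : IsFairCoin μ) (n i : ℕ) :
    1 ≤ μ.real (allTrue (coinBlock n i)) * (n + 1) ^ 2 := by
  have hlog : (2 : ℝ) ^ Nat.log 2 (n + 1) ≤ n + 1 := by
    exact_mod_cast Nat.pow_log_le_self 2 n.succ_ne_zero
  rw [hμ.measureReal_allTrue_coinBlock, ← div_eq_inv_mul, one_le_div (by positivity)]
  gcongr

theorem IsFairCoin.measureReal_allTrue_coinBlock_le (hμ : IsFairCoin μ) (n i : ℕ) :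
    μ.real (allTrue (coinBlock n i)) ≤ 4 * (1 / ((n + 1 : ℕ) : ℝ) ^ 2) := by
  have hlog : ((n + 1 : ℕ) : ℝ) ≤ 2 * 2 ^ Nat.log 2 (n + 1) := by
    exact_mod_cast (Nat.lt_pow_succ_log_self one_lt_two (n + 1)).le.trans_eq (pow_succ' ..)
  rw [hμ.measureReal_allTrue_coinBlock, mul_one_div, inv_eq_one_div,
    div_le_div_iff₀ (by positivity) (by positivity), one_mul]
  calc ((n + 1 : ℕ) : ℝ) ^ 2 ≤ (2 * 2 ^ Nat.log 2 (n + 1)) ^ 2 := by gcongr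
    _ = 4 * (2 ^ Nat.log 2 (n + 1)) ^ 2 := by ring

theorem IsFairCoin.measure_limsup_allTrue_coinBlock_eq_zero (hμ : IsFairCoin μ) (f : ℕ → ℕ) :
    μ (limsup (fun n => allTrue (coinBlock n (f n))) atTop) = 0 := by
  have := hμ.1
  have hsummable : Summable fun n => μ.real (allTrue (coinBlock n (f n))) :=
    .of_nonneg_of_le (fun _ => measureReal_nonneg)
      (fun n => hμ.measureReal_allTrue_coinBlock_le n (f n))
      (((summable_nat_add_iff 1).2 (Real.summable_one_div_nat_pow.2 one_lt_two)).mul_left 4)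
  refine measure_limsup_atTop_eq_zero ?_
  simpa only [ofReal_measureReal (measure_ne_top μ _)] using hsummable.tsum_ofReal_ne_top

theorem IsFairCoin.exists_tukeyMap_slalom_null (hμ : IsFairCoin μ) :
    ∃ Ψ : (ℕ → ℕ) → Set (ℕ → Bool), (∀ f, μ (Ψ f) = 0) ∧
      ∀ N, μ N = 0 → ∃ φ, IsSlalom φ ∧ ∀ f, Ψ f ⊆ N → ∀ᶠ n in atTop, f n ∈ φ n :=
  ⟨_, hμ.measure_limsup_allTrue_coinBlock_eq_zero, fun _ hN =>
    exists_isSlalom_forall_limsup_subset (fun n i => isOpen_allTrue (coinBlock n i))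
      (fun n => hμ.iIndepSet_allTrue (pairwise_disjoint_coinBlock n))
      hμ.one_le_measureReal_allTrue_coinBlock_mul hN⟩

end FairCoin

/-- add(N) = b_{⊆*}. -/
theorem stmt12 (μ : Measure (ℕ → Bool)) (hμ : IsFairCoin μ) :
    sInf {c : Cardinal | ∃ 𝒜 : Set (Set (ℕ → Bool)), #𝒜 = c ∧
        (∀ A ∈ 𝒜, μ A = 0) ∧ μ (⋃₀ 𝒜) ≠ 0} =
      sInf {c : Cardinal | ∃ F : Set (ℕ → ℕ), #F = c ∧
        ¬ ∃ φ : ℕ → Finset ℕ, IsSlalom φ ∧ ∀ f ∈ F, ∀ᶠ n in atTop, f n ∈ φ n} := by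
  have := hμ.1
  obtain ⟨Φ, hΦ⟩ := exists_tukeyMap_null_slalom μ
  obtain ⟨Ψ, hΨ0, hΨ⟩ := hμ.exists_tukeyMap_slalom_null
  have hnull : ∀ F, ¬ IsLocalized F → μ (⋃₀ (Ψ '' F)) ≠ 0 := by
    intro F hF h0
    obtain ⟨φ, hφ, hcapt⟩ := hΨ _ h0
    exact hF ⟨φ, hφ, fun f hf => hcapt f (subset_sUnion_of_mem (mem_image_of_mem Ψ hf))⟩
  have hcode : ∀ 𝒜, (∀ A ∈ 𝒜, μ A = 0) → μ (⋃₀ 𝒜) ≠ 0 → ¬ IsLocalized (Φ '' 𝒜) := by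
    rintro 𝒜 h0 hpos ⟨φ, hφ, hcapt⟩
    obtain ⟨N, hN, hsub⟩ := hΦ φ hφ
    exact hpos (measure_mono_null
      (sUnion_subset fun A hA => hsub A (h0 A hA) (hcapt _ (mem_image_of_mem Φ hA))) hN)
  have hΨnull : ∀ F, ∀ A ∈ Ψ '' F, μ A = 0 := fun F => forall_mem_image.2 fun f _ => hΨ0 f
  apply le_antisymm
  · refine le_csInf ⟨_, univ, rfl, not_isLocalized_univ⟩ ?_
    rintro _ ⟨F, rfl, hF⟩
    exact le_trans (csInf_le' ⟨Ψ '' F, rfl, hΨnull F, hnull F hF⟩) mk_image_le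
  · refine le_csInf ⟨_, Ψ '' univ, rfl, hΨnull univ, hnull univ not_isLocalized_univ⟩ ?_
    rintro _ ⟨𝒜, rfl, h0, hpos⟩
    exact le_trans (csInf_le' ⟨Φ '' 𝒜, rfl, hcode 𝒜 h0 hpos⟩) mk_image_le
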